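/- Let (p_k^{(1)}) and (p_k^{(2)}) be critical offspring distributions, each with p_1 < 1, with pgfs Φ_1, Φ_2 and tree-size probabilities (q_n^{(1)}), (q_n^{(2)}). Then the strict inequalities ∑_{n≥1} q_n^{(1)} (n−1+t)^{−m} < ∑_{n≥1} q_n^{(2)} (n−1+t)^{−m} hold for all integers m ≥ 1 and all real t > 0 if and only if Φ_1(t) ≤ Φ_2(t) for all t ∈ (0,1) with strict inequality for at least one t ∈ (0,1). -/

import Mathlib

/-!
Put `c n = q (n + 1)`. Both sides are read off the Laplace transform `L s = ∑ c n e^(-n s)`.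

* Under `z = e^(-s)` it is the tree-size generating function: `y(z) = z L(s)`. The negative moments
  `S m t = ∑ c n (n + t)^(-m)` satisfy `Γ(m) S m t = ∫ s^(m-1) e^(-ts) L(s) ds`, an integral of `L`
  against a positive kernel, and conversely `(m/s)^m S m (m/s) → L(s)` as `m → ∞` (Post–Widder).
  So comparing all `S m t` amounts to comparing the functions `y`.
* `y` increases from `0` to `1` on `(0, 1)`, and `y = z Φ(y)` says that its inverse is
  `t ↦ t / Φ(t)`. A larger `Φ` is a smaller inverse, that is, a larger `y`.
-/

open Filter MeasureTheory Set Topology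

section Comparison

lemma forall_le_and_exists_lt_iff {α β : Type*} [LinearOrder β] {s : Set α} {f g : α → β} :
    ((∀ x ∈ s, f x ≤ g x) ∧ ∃ x ∈ s, f x < g x) ↔
      (∀ x ∈ s, f x ≤ g x) ∧ ¬ ∀ x ∈ s, g x ≤ f x := by
  simp only [not_forall, not_le, exists_prop]

lemma setIntegral_lt_setIntegral_of_continuousOn {X : Type*} [TopologicalSpace X]
    [MeasurableSpace X] [OpensMeasurableSpace X] {μ : Measure X} [μ.IsOpenPosMeasure]
    {U : Set X} (hU : IsOpen U) {f g : X → ℝ} (hf : ContinuousOn f U) (hg : ContinuousOn g U)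
    (hfi : IntegrableOn f U μ) (hgi : IntegrableOn g U μ) (hle : ∀ x ∈ U, f x ≤ g x)
    (hlt : ∃ x ∈ U, f x < g x) : ∫ x in U, f x ∂μ < ∫ x in U, g x ∂μ := by
  obtain ⟨x, hx, hfg⟩ := hlt
  refine (setIntegral_mono_on hfi hgi hU.measurableSet hle).lt_of_ne fun heq => hfg.ne ?_
  have hae : f =ᵐ[μ.restrict U] g :=
    (integral_eq_iff_of_ae_le hfi hgi (ae_restrict_of_forall_mem hU.measurableSet hle)).1 heq
  exact Measure.eqOn_open_of_ae_eq hae hU hf hg hx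

lemma forall_le_iff_of_eq_mul_comp {K : Type*} [Field K] [LinearOrder K] [IsStrictOrderedRing K]
    {s t : Set K} (hs : ∀ z ∈ s, 0 < z) (ht : ∀ u ∈ t, 0 < u) {y₁ y₂ Φ₁ Φ₂ : K → K}
    (hmono : StrictMonoOn y₁ s) (him₁ : y₁ '' s = t) (him₂ : y₂ '' s = t)
    (hfix₁ : ∀ z ∈ s, y₁ z = z * Φ₁ (y₁ z)) (hfix₂ : ∀ z ∈ s, y₂ z = z * Φ₂ (y₂ z)) :
    (∀ z ∈ s, y₁ z ≤ y₂ z) ↔ ∀ u ∈ t, Φ₁ u ≤ Φ₂ u := by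
  rw [← him₂, forall_mem_image]
  refine forall₂_congr fun z hz => ?_
  have hy : y₂ z ∈ t := him₂ ▸ mem_image_of_mem y₂ hz
  obtain ⟨z', hz', heq⟩ : y₂ z ∈ y₁ '' s := him₁ ▸ hy
  have hΦ₁ : Φ₁ (y₂ z) = y₂ z / z' := by
    rw [eq_div_iff (hs z' hz').ne', mul_comm, ← heq, ← hfix₁ z' hz']
  have hΦ₂ : Φ₂ (y₂ z) = y₂ z / z := by
    rw [eq_div_iff (hs z hz).ne', mul_comm, ← hfix₂ z hz]
  calc y₁ z ≤ y₂ z ↔ z ≤ z' := by rw [← heq, hmono.le_iff_le hz hz']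
    _ ↔ y₂ z / z' ≤ y₂ z / z :=
      (div_le_div_iff_of_pos_left (ht _ hy) (hs z' hz') (hs z hz)).symm
    _ ↔ Φ₁ (y₂ z) ≤ Φ₂ (y₂ z) := by rw [hΦ₁, hΦ₂]

end Comparison

section LaplaceStieltjes

/-- The Laplace transform `s ↦ ∫ e^(-xs) dμ(x)` of the discrete measure `μ` that puts mass `w i`
at the point `x i`. -/
noncomputable def laplaceSum {ι : Type*} (w x : ι → ℝ) (s : ℝ) : ℝ :=
  ∑' i, w i * Real.exp (-(x i * s))

/-- The generalized Stieltjes transform `t ↦ ∫ (x + t)^(-a) dμ(x)` of order `a` of the discrete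
measure `μ` that puts mass `w i` at the point `x i`. -/
noncomputable def stieltjesSum {ι : Type*} (w x : ι → ℝ) (a t : ℝ) : ℝ :=
  ∑' i, w i * (x i + t) ^ (-a)

lemma integrableOn_rpow_mul_exp_neg_mul {a t : ℝ} (ha : 0 < a) (ht : 0 < t) :
    IntegrableOn (fun s => s ^ (a - 1) * Real.exp (-(t * s))) (Ioi 0) := by
  simpa using integrableOn_rpow_mul_exp_neg_mul_rpow (p := 1) (by linarith : -1 < a - 1)
    zero_lt_one ht

lemma setIntegral_rpow_mul_exp_neg_mul {a t : ℝ} (ha : 0 < a) (ht : 0 < t) :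
    ∫ s in Ioi 0, s ^ (a - 1) * Real.exp (-(t * s)) = t ^ (-a) * Real.Gamma a := by
  rw [Real.integral_rpow_mul_exp_neg_mul_Ioi ha ht, one_div, Real.inv_rpow ht.le,
    Real.rpow_neg ht.le]

variable {ι : Type*} {w x : ι → ℝ}

lemma norm_mul_exp_neg_mul_le (hw : ∀ i, 0 ≤ w i) (hx : ∀ i, 0 ≤ x i) {s : ℝ} (hs : 0 ≤ s)
    (i : ι) : ‖w i * Real.exp (-(x i * s))‖ ≤ w i := by
  rw [Real.norm_of_nonneg (mul_nonneg (hw i) (Real.exp_pos _).le)]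
  exact mul_le_of_le_one_right (hw i)
    (Real.exp_le_one_iff.2 (neg_nonpos.2 (mul_nonneg (hx i) hs)))

lemma continuousOn_laplaceSum (hw : ∀ i, 0 ≤ w i) (hsum : Summable w) (hx : ∀ i, 0 ≤ x i) :
    ContinuousOn (laplaceSum w x) (Ici 0) :=
  continuousOn_tsum (fun _ => by fun_prop) hsum fun i _ hs => norm_mul_exp_neg_mul_le hw hx hs i

lemma norm_laplaceSum_le (hw : ∀ i, 0 ≤ w i) (hsum : Summable w) (hx : ∀ i, 0 ≤ x i) {s : ℝ}
    (hs : 0 ≤ s) : ‖laplaceSum w x s‖ ≤ ∑' i, w i :=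
  tsum_of_norm_bounded hsum.hasSum (norm_mul_exp_neg_mul_le hw hx hs)

lemma integrableOn_laplaceSum_mul_rpow_mul_exp (hw : ∀ i, 0 ≤ w i) (hsum : Summable w)
    (hx : ∀ i, 0 ≤ x i) {a t : ℝ} (ha : 0 < a) (ht : 0 < t) :
    IntegrableOn (fun s => laplaceSum w x s * (s ^ (a - 1) * Real.exp (-(t * s)))) (Ioi 0) :=
  (integrableOn_rpow_mul_exp_neg_mul ha ht).bdd_mul
    (((continuousOn_laplaceSum hw hsum hx).mono Ioi_subset_Ici_self).aestronglyMeasurable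
      measurableSet_Ioi)
    (ae_restrict_of_forall_mem measurableSet_Ioi fun _ hs =>
      norm_laplaceSum_le hw hsum hx (mem_Ioi.1 hs).le)

lemma summable_mul_add_rpow_neg (hw : ∀ i, 0 ≤ w i) (hsum : Summable w) (hx : ∀ i, 0 ≤ x i)
    {a t : ℝ} (ha : 0 ≤ a) (ht : 0 < t) : Summable fun i => w i * (x i + t) ^ (-a) := by
  refine Summable.of_nonneg_of_le (fun i => ?_) (fun i => ?_) (hsum.mul_right (t ^ (-a)))
  · exact mul_nonneg (hw i) (Real.rpow_nonneg (add_nonneg (hx i) ht.le) _)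
  · exact mul_le_mul_of_nonneg_left (Real.rpow_le_rpow_of_nonpos ht
      (le_add_of_nonneg_left (hx i)) (neg_nonpos.2 ha)) (hw i)

lemma stieltjesSum_mul_Gamma [Countable ι] (hw : ∀ i, 0 ≤ w i) (hsum : Summable w)
    (hx : ∀ i, 0 ≤ x i) {a t : ℝ} (ha : 0 < a) (ht : 0 < t) :
    stieltjesSum w x a t * Real.Gamma a =
      ∫ s in Ioi 0, laplaceSum w x s * (s ^ (a - 1) * Real.exp (-(t * s))) := by
  have hxt (i : ι) : 0 < x i + t := add_pos_of_nonneg_of_pos (hx i) ht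
  let F (i : ι) (s : ℝ) : ℝ := w i * (s ^ (a - 1) * Real.exp (-((x i + t) * s)))
  have hF_int (i : ι) : IntegrableOn (F i) (Ioi 0) :=
    (integrableOn_rpow_mul_exp_neg_mul ha (hxt i)).const_mul (w i)
  have hF_integral (i : ι) : ∫ s in Ioi 0, F i s = w i * (x i + t) ^ (-a) * Real.Gamma a := by
    rw [integral_const_mul, setIntegral_rpow_mul_exp_neg_mul ha (hxt i), mul_assoc]
  have hF_norm (i : ι) : ∫ s in Ioi 0, ‖F i s‖ = ∫ s in Ioi 0, F i s :=
    setIntegral_congr_fun measurableSet_Ioi fun s hs => Real.norm_of_nonneg <|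
      mul_nonneg (hw i) (mul_nonneg (Real.rpow_nonneg (mem_Ioi.1 hs).le _) (Real.exp_pos _).le)
  have hF_summable : Summable fun i => ∫ s in Ioi 0, ‖F i s‖ := by
    simp_rw [hF_norm, hF_integral]
    exact (summable_mul_add_rpow_neg hw hsum hx ha.le ht).mul_right _
  have hF_tsum (s : ℝ) :
      ∑' i, F i s = laplaceSum w x s * (s ^ (a - 1) * Real.exp (-(t * s))) := by
    rw [laplaceSum, ← tsum_mul_right]
    refine tsum_congr fun i => ?_
    simp only [F, add_mul, neg_add, Real.exp_add]
    ring
  calc stieltjesSum w x a t * Real.Gamma a = ∑' i, ∫ s in Ioi 0, F i s := by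
        simp_rw [hF_integral, tsum_mul_right, stieltjesSum]
    _ = ∫ s in Ioi 0, ∑' i, F i s :=
      (hasSum_integral_of_summable_integral_norm hF_int hF_summable).tsum_eq
    _ = _ := by simp_rw [hF_tsum]

lemma div_pow_mul_add_div_rpow_neg {y s : ℝ} (hy : 0 ≤ y) (hs : 0 < s) {m : ℕ} (hm : 0 < m) :
    (m / s) ^ m * (y + m / s) ^ (-(m : ℝ)) = ((1 + y * s / m) ^ m)⁻¹ := by
  have hfactor : y + m / s = m / s * (1 + y * s / m) := by
    field_simp
    ring
  rw [Real.rpow_neg (by positivity), Real.rpow_natCast, hfactor, mul_pow, mul_inv,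
    mul_inv_cancel_left₀ (by positivity)]

lemma tendsto_div_pow_mul_stieltjesSum (hw : ∀ i, 0 ≤ w i) (hsum : Summable w)
    (hx : ∀ i, 0 ≤ x i) {s : ℝ} (hs : 0 < s) :
    Tendsto (fun m : ℕ => (m / s) ^ m * stieltjesSum w x m (m / s)) atTop
      (𝓝 (laplaceSum w x s)) := by
  have hlim : Tendsto (fun m : ℕ => ∑' i, w i * ((1 + x i * s / m) ^ m)⁻¹) atTop
      (𝓝 (laplaceSum w x s)) := by
    refine tendsto_tsum_of_dominated_convergence hsum (fun i => ?_) (.of_forall fun m i => ?_)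
    · rw [Real.exp_neg]
      exact ((Real.tendsto_one_add_div_pow_exp _).inv₀ (Real.exp_pos _).ne').const_mul _
    · have hone : 1 ≤ (1 + x i * s / m) ^ m := by
        have := hx i
        exact one_le_pow₀ (le_add_of_nonneg_right (by positivity))
      rw [Real.norm_of_nonneg (mul_nonneg (hw i) (by positivity))]
      exact mul_le_of_le_one_right (hw i) (inv_le_one_of_one_le₀ hone)
  refine hlim.congr' ?_
  filter_upwards [eventually_gt_atTop 0] with m hm
  rw [stieltjesSum, ← tsum_mul_left]
  refine tsum_congr fun i => ?_
  rw [mul_left_comm, div_pow_mul_add_div_rpow_neg (hx i) hs hm]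

variable {κ : Type*} {v u : κ → ℝ}

lemma laplaceSum_le_of_stieltjesSum_le (hw : ∀ i, 0 ≤ w i) (hwsum : Summable w)
    (hx : ∀ i, 0 ≤ x i) (hv : ∀ j, 0 ≤ v j) (hvsum : Summable v) (hu : ∀ j, 0 ≤ u j)
    (hle : ∀ m : ℕ, 1 ≤ m → ∀ t : ℝ, 0 < t → stieltjesSum w x m t ≤ stieltjesSum v u m t)
    {s : ℝ} (hs : 0 < s) : laplaceSum w x s ≤ laplaceSum v u s := by
  refine le_of_tendsto_of_tendsto (tendsto_div_pow_mul_stieltjesSum hw hwsum hx hs)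
    (tendsto_div_pow_mul_stieltjesSum hv hvsum hu hs) ?_
  filter_upwards [eventually_gt_atTop 0] with m hm
  exact mul_le_mul_of_nonneg_left (hle m hm _ (by positivity)) (by positivity)

variable [Countable ι] [Countable κ]

lemma stieltjesSum_le_of_laplaceSum_le (hw : ∀ i, 0 ≤ w i) (hwsum : Summable w)
    (hx : ∀ i, 0 ≤ x i) (hv : ∀ j, 0 ≤ v j) (hvsum : Summable v) (hu : ∀ j, 0 ≤ u j)
    (hle : ∀ s ∈ Ioi (0 : ℝ), laplaceSum w x s ≤ laplaceSum v u s) {a t : ℝ} (ha : 0 < a)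
    (ht : 0 < t) : stieltjesSum w x a t ≤ stieltjesSum v u a t := by
  refine le_of_mul_le_mul_right ?_ (Real.Gamma_pos_of_pos ha)
  rw [stieltjesSum_mul_Gamma hw hwsum hx ha ht, stieltjesSum_mul_Gamma hv hvsum hu ha ht]
  refine setIntegral_mono_on (integrableOn_laplaceSum_mul_rpow_mul_exp hw hwsum hx ha ht)
    (integrableOn_laplaceSum_mul_rpow_mul_exp hv hvsum hu ha ht) measurableSet_Ioi
    fun s hs => mul_le_mul_of_nonneg_right (hle s hs) ?_
  exact mul_nonneg (Real.rpow_nonneg (mem_Ioi.1 hs).le _) (Real.exp_pos _).le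

lemma stieltjesSum_lt_of_laplaceSum_le_of_lt (hw : ∀ i, 0 ≤ w i) (hwsum : Summable w)
    (hx : ∀ i, 0 ≤ x i) (hv : ∀ j, 0 ≤ v j) (hvsum : Summable v) (hu : ∀ j, 0 ≤ u j)
    (hle : ∀ s ∈ Ioi (0 : ℝ), laplaceSum w x s ≤ laplaceSum v u s)
    (hlt : ∃ s ∈ Ioi (0 : ℝ), laplaceSum w x s < laplaceSum v u s) {a t : ℝ} (ha : 0 < a)
    (ht : 0 < t) : stieltjesSum w x a t < stieltjesSum v u a t := by
  have hkernel_pos (s : ℝ) (hs : s ∈ Ioi 0) : 0 < s ^ (a - 1) * Real.exp (-(t * s)) :=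
    mul_pos (Real.rpow_pos_of_pos hs _) (Real.exp_pos _)
  have hkernel_cont : ContinuousOn (fun s => s ^ (a - 1) * Real.exp (-(t * s))) (Ioi 0) :=
    (continuousOn_id.rpow_const fun s hs => .inl (mem_Ioi.1 hs).ne').mul (by fun_prop)
  obtain ⟨s, hs, hlts⟩ := hlt
  refine lt_of_mul_lt_mul_right ?_ (Real.Gamma_pos_of_pos ha).le
  rw [stieltjesSum_mul_Gamma hw hwsum hx ha ht, stieltjesSum_mul_Gamma hv hvsum hu ha ht]
  exact setIntegral_lt_setIntegral_of_continuousOn isOpen_Ioi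
    (((continuousOn_laplaceSum hw hwsum hx).mono Ioi_subset_Ici_self).mul hkernel_cont)
    (((continuousOn_laplaceSum hv hvsum hu).mono Ioi_subset_Ici_self).mul hkernel_cont)
    (integrableOn_laplaceSum_mul_rpow_mul_exp hw hwsum hx ha ht)
    (integrableOn_laplaceSum_mul_rpow_mul_exp hv hvsum hu ha ht)
    (fun s hs => mul_le_mul_of_nonneg_right (hle s hs) (hkernel_pos s hs).le)
    ⟨s, hs, mul_lt_mul_of_pos_right hlts (hkernel_pos s hs)⟩

lemma forall_stieltjesSum_lt_iff (hw : ∀ i, 0 ≤ w i) (hwsum : Summable w) (hx : ∀ i, 0 ≤ x i)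
    (hv : ∀ j, 0 ≤ v j) (hvsum : Summable v) (hu : ∀ j, 0 ≤ u j) :
    (∀ m : ℕ, 1 ≤ m → ∀ t : ℝ, 0 < t → stieltjesSum w x m t < stieltjesSum v u m t) ↔
      (∀ s ∈ Ioi (0 : ℝ), laplaceSum w x s ≤ laplaceSum v u s) ∧
        ∃ s ∈ Ioi (0 : ℝ), laplaceSum w x s < laplaceSum v u s := by
  refine ⟨fun h => forall_le_and_exists_lt_iff.2 ⟨fun s hs => ?_, fun hge => ?_⟩,
    fun h m hm t ht => ?_⟩
  · exact laplaceSum_le_of_stieltjesSum_le hw hwsum hx hv hvsum hu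
      (fun m hm t ht => (h m hm t ht).le) hs
  · exact (h 1 le_rfl 1 one_pos).not_ge <|
      stieltjesSum_le_of_laplaceSum_le hv hvsum hu hw hwsum hx hge (by simp) one_pos
  · exact stieltjesSum_lt_of_laplaceSum_le_of_lt hw hwsum hx hv hvsum hu h.1 h.2
      (Nat.cast_pos.2 hm) ht

end LaplaceStieltjes

section GeneratingFunction

/-- The ordinary generating function `∑ a n * t ^ n` of the sequence `a`. -/
noncomputable def genFun (a : ℕ → ℝ) (t : ℝ) : ℝ := ∑' n, a n * t ^ n

lemma summable_of_tsum_ne_zero {ι : Type*} {a : ι → ℝ} (h : ∑' i, a i ≠ 0) : Summable a :=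
  not_imp_comm.1 tsum_eq_zero_of_not_summable h

lemma tsum_eq_tsum_succ {M : Type*} [AddCommMonoid M] [TopologicalSpace M] {f : ℕ → M}
    (h0 : f 0 = 0) : ∑' n, f n = ∑' n, f (n + 1) := by
  refine (Nat.succ_injective.tsum_eq fun n hn => ?_).symm
  cases n with
  | zero => exact absurd h0 hn
  | succ k => exact mem_range_self k

lemma norm_mul_pow_le {a : ℕ → ℝ} (ha : ∀ n, 0 ≤ a n) {t : ℝ} (ht : t ∈ Icc (0 : ℝ) 1)
    (n : ℕ) : ‖a n * t ^ n‖ ≤ a n := by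
  rw [Real.norm_of_nonneg (mul_nonneg (ha n) (pow_nonneg ht.1 n))]
  exact mul_le_of_le_one_right (ha n) (pow_le_one₀ ht.1 ht.2)

lemma continuousOn_genFun {a : ℕ → ℝ} (ha : ∀ n, 0 ≤ a n) (hsum : Summable a) :
    ContinuousOn (genFun a) (Icc 0 1) :=
  continuousOn_tsum (fun _ => by fun_prop) hsum fun n _ ht => norm_mul_pow_le ha ht n

lemma strictMonoOn_genFun {a : ℕ → ℝ} (ha : ∀ n, 0 ≤ a n) (hsum : Summable a)
    (hne : ∃ n ≠ 0, a n ≠ 0) : StrictMonoOn (genFun a) (Icc 0 1) := by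
  intro s hs t ht hst
  obtain ⟨n, hn, han⟩ := hne
  refine Summable.tsum_lt_tsum (i := n) (fun k => ?_) ?_
    (hsum.of_norm_bounded (norm_mul_pow_le ha hs)) (hsum.of_norm_bounded (norm_mul_pow_le ha ht))
  · exact mul_le_mul_of_nonneg_left (pow_le_pow_left₀ hs.1 hst.le k) (ha k)
  · exact mul_lt_mul_of_pos_left (pow_lt_pow_left₀ hst hs.1 hn) ((ha n).lt_of_ne' han)

lemma genFun_zero (a : ℕ → ℝ) : genFun a 0 = a 0 := by
  rw [genFun, tsum_eq_single 0 fun n hn => by rw [zero_pow hn, mul_zero], pow_zero, mul_one]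

lemma genFun_one (a : ℕ → ℝ) : genFun a 1 = ∑' n, a n := by
  simp only [genFun, one_pow, mul_one]

lemma image_genFun_Ioo {a : ℕ → ℝ} (ha : ∀ n, 0 ≤ a n) (hsum : Summable a)
    (hne : ∃ n ≠ 0, a n ≠ 0) : genFun a '' Ioo 0 1 = Ioo (a 0) (∑' n, a n) := by
  rw [(continuousOn_genFun ha hsum).image_Ioo_of_strictMonoOn zero_le_one
    (strictMonoOn_genFun ha hsum hne), genFun_zero, genFun_one]

lemma genFun_exp_neg {a : ℕ → ℝ} (h0 : a 0 = 0) (s : ℝ) :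
    genFun a (Real.exp (-s)) = Real.exp (-s) * laplaceSum (fun n => a (n + 1)) (↑) s := by
  rw [genFun, tsum_eq_tsum_succ (by rw [h0, zero_mul]), laplaceSum, ← tsum_mul_left]
  refine tsum_congr fun n => ?_
  rw [pow_succ, ← Real.exp_nat_mul, mul_neg]
  ring

lemma tsum_mul_sub_one_add_rpow_neg {a : ℕ → ℝ} (h0 : a 0 = 0) (r t : ℝ) :
    ∑' n : ℕ, a n * ((n : ℝ) - 1 + t) ^ (-r) = stieltjesSum (fun n => a (n + 1)) (↑) r t := by
  rw [tsum_eq_tsum_succ (by rw [h0, zero_mul]), stieltjesSum]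
  simp only [Nat.cast_add_one, add_sub_cancel_right]

lemma image_exp_neg_Ioi : (fun s => Real.exp (-s)) '' Ioi 0 = Ioo 0 1 := by
  ext z
  constructor
  · rintro ⟨s, hs, rfl⟩
    exact ⟨Real.exp_pos _, Real.exp_lt_one_iff.2 (neg_neg_of_pos hs)⟩
  · exact fun hz => ⟨-Real.log z, neg_pos.2 (Real.log_neg hz.1 hz.2), by
      simp only [neg_neg, Real.exp_log hz.1]⟩

lemma forall_laplaceSum_le_iff_genFun {a b : ℕ → ℝ} (ha0 : a 0 = 0) (hb0 : b 0 = 0) :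
    (∀ s ∈ Ioi (0 : ℝ), laplaceSum (fun n => a (n + 1)) (↑) s ≤
        laplaceSum (fun n => b (n + 1)) (↑) s) ↔
      ∀ z ∈ Ioo (0 : ℝ) 1, genFun a z ≤ genFun b z := by
  rw [← image_exp_neg_Ioi, forall_mem_image]
  refine forall₂_congr fun s _ => ?_
  rw [genFun_exp_neg ha0, genFun_exp_neg hb0, mul_le_mul_iff_right₀ (Real.exp_pos _)]

end GeneratingFunction

section TreeSize

variable {q q₁ q₂ : ℕ → ℝ}

lemma exists_ne_zero_of_tsum_eq_one (hq0 : q 0 = 0) (hqsum : ∑' n, q n = 1) :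
    ∃ n ≠ 0, q n ≠ 0 := by
  obtain ⟨n, hn⟩ : ∃ n, q n ≠ 0 := by
    by_contra! h
    simp only [h, tsum_zero, zero_ne_one] at hqsum
  exact ⟨n, fun h => hn (h ▸ hq0), hn⟩

lemma image_genFun_Ioo_of_tsum_eq_one (hq0 : q 0 = 0) (hqnn : ∀ n, 0 ≤ q n)
    (hqsum : ∑' n, q n = 1) : genFun q '' Ioo 0 1 = Ioo 0 1 := by
  rw [image_genFun_Ioo hqnn (summable_of_tsum_ne_zero (hqsum ▸ one_ne_zero))
    (exists_ne_zero_of_tsum_eq_one hq0 hqsum), hq0, hqsum]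

lemma forall_genFun_le_iff_of_eq_mul_comp (hq₁0 : q₁ 0 = 0) (hq₂0 : q₂ 0 = 0)
    (hq₁nn : ∀ n, 0 ≤ q₁ n) (hq₂nn : ∀ n, 0 ≤ q₂ n)
    (hq₁sum : ∑' n, q₁ n = 1) (hq₂sum : ∑' n, q₂ n = 1) {Φ₁ Φ₂ : ℝ → ℝ}
    (hfix₁ : ∀ z ∈ Ioo (0 : ℝ) 1, genFun q₁ z = z * Φ₁ (genFun q₁ z))
    (hfix₂ : ∀ z ∈ Ioo (0 : ℝ) 1, genFun q₂ z = z * Φ₂ (genFun q₂ z)) :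
    (∀ z ∈ Ioo (0 : ℝ) 1, genFun q₁ z ≤ genFun q₂ z) ↔ ∀ t ∈ Ioo (0 : ℝ) 1, Φ₁ t ≤ Φ₂ t := by
  have hmono : StrictMonoOn (genFun q₁) (Ioo 0 1) :=
    (strictMonoOn_genFun hq₁nn (summable_of_tsum_ne_zero (hq₁sum ▸ one_ne_zero))
      (exists_ne_zero_of_tsum_eq_one hq₁0 hq₁sum)).mono Ioo_subset_Icc_self
  exact forall_le_iff_of_eq_mul_comp (fun _ hz => hz.1) (fun _ ht => ht.1) hmono
    (image_genFun_Ioo_of_tsum_eq_one hq₁0 hq₁nn hq₁sum)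
    (image_genFun_Ioo_of_tsum_eq_one hq₂0 hq₂nn hq₂sum) hfix₁ hfix₂

theorem stmt10_general (hq₁0 : q₁ 0 = 0) (hq₂0 : q₂ 0 = 0)
    (hq₁nn : ∀ n, 0 ≤ q₁ n) (hq₂nn : ∀ n, 0 ≤ q₂ n)
    (hq₁sum : ∑' n, q₁ n = 1) (hq₂sum : ∑' n, q₂ n = 1) {Φ₁ Φ₂ : ℝ → ℝ}
    (hfix₁ : ∀ z ∈ Ioo (0 : ℝ) 1, genFun q₁ z = z * Φ₁ (genFun q₁ z))
    (hfix₂ : ∀ z ∈ Ioo (0 : ℝ) 1, genFun q₂ z = z * Φ₂ (genFun q₂ z)) :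
    (∀ m : ℕ, 1 ≤ m → ∀ t : ℝ, 0 < t →
        ∑' n : ℕ, q₁ n * ((n : ℝ) - 1 + t) ^ (-(m : ℝ)) <
          ∑' n : ℕ, q₂ n * ((n : ℝ) - 1 + t) ^ (-(m : ℝ))) ↔
      (∀ t ∈ Ioo (0 : ℝ) 1, Φ₁ t ≤ Φ₂ t) ∧ ∃ t ∈ Ioo (0 : ℝ) 1, Φ₁ t < Φ₂ t := by
  have summable_succ {q : ℕ → ℝ} (hqsum : ∑' n, q n = 1) : Summable fun n => q (n + 1) :=
    (summable_nat_add_iff 1).2 (summable_of_tsum_ne_zero (hqsum ▸ one_ne_zero))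
  simp only [tsum_mul_sub_one_add_rpow_neg hq₁0, tsum_mul_sub_one_add_rpow_neg hq₂0]
  rw [forall_stieltjesSum_lt_iff (fun n => hq₁nn (n + 1)) (summable_succ hq₁sum) Nat.cast_nonneg
      (fun n => hq₂nn (n + 1)) (summable_succ hq₂sum) Nat.cast_nonneg,
    forall_le_and_exists_lt_iff, forall_le_and_exists_lt_iff,
    forall_laplaceSum_le_iff_genFun hq₁0 hq₂0, forall_laplaceSum_le_iff_genFun hq₂0 hq₁0,
    forall_genFun_le_iff_of_eq_mul_comp hq₁0 hq₂0 hq₁nn hq₂nn hq₁sum hq₂sum hfix₁ hfix₂,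
    forall_genFun_le_iff_of_eq_mul_comp hq₂0 hq₁0 hq₂nn hq₁nn hq₂sum hq₁sum hfix₂ hfix₁]

end TreeSize

/-- Theorem 6.8 of the paper. For two critical offspring distributions
(each with `p 1 < 1`), the strict inequalities
`∑ q₁ₙ (n−1+t)^{−m} < ∑ q₂ₙ (n−1+t)^{−m}` hold for all integers `m ≥ 1` and all reals
`t > 0` iff `Φ₁ ≤ Φ₂` on `(0,1)` with strict inequality somewhere. -/
theorem stmt10
    (p₁ p₂ : ℕ → ℝ) (hp₁ : ∀ k, 0 ≤ p₁ k) (hp₂ : ∀ k, 0 ≤ p₂ k)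
    (hpsum₁ : ∑' k, p₁ k = 1) (hpsum₂ : ∑' k, p₂ k = 1)
    (hcrit₁ : ∑' k : ℕ, (k : ℝ) * p₁ k = 1) (hcrit₂ : ∑' k : ℕ, (k : ℝ) * p₂ k = 1)
    (hp₁1 : p₁ 1 < 1) (hp₂1 : p₂ 1 < 1)
    (q₁ q₂ : ℕ → ℝ)
    (hq₁0 : q₁ 0 = 0) (hq₂0 : q₂ 0 = 0)
    (hq₁nn : ∀ n, 0 ≤ q₁ n) (hq₂nn : ∀ n, 0 ≤ q₂ n)
    (hq₁sum : ∑' n, q₁ n = 1) (hq₂sum : ∑' n, q₂ n = 1)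
    (hfix₁ : ∀ z ∈ Set.Icc (0:ℝ) 1,
      (∑' n, q₁ n * z ^ n) = z * ∑' k, p₁ k * (∑' n, q₁ n * z ^ n) ^ k)
    (hfix₂ : ∀ z ∈ Set.Icc (0:ℝ) 1,
      (∑' n, q₂ n * z ^ n) = z * ∑' k, p₂ k * (∑' n, q₂ n * z ^ n) ^ k) :
    (∀ m : ℕ, 1 ≤ m → ∀ t : ℝ, 0 < t →
        (∑' n : ℕ, q₁ n * ((n : ℝ) - 1 + t) ^ (-(m : ℝ))) <
          ∑' n : ℕ, q₂ n * ((n : ℝ) - 1 + t) ^ (-(m : ℝ))) ↔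
      ((∀ t ∈ Set.Ioo (0:ℝ) 1, (∑' k, p₁ k * t ^ k) ≤ ∑' k, p₂ k * t ^ k) ∧
        ∃ t ∈ Set.Ioo (0:ℝ) 1, (∑' k, p₁ k * t ^ k) < ∑' k, p₂ k * t ^ k) :=
  stmt10_general hq₁0 hq₂0 hq₁nn hq₂nn hq₁sum hq₂sum (Φ₁ := genFun p₁) (Φ₂ := genFun p₂)
    (fun z hz => hfix₁ z (Ioo_subset_Icc_self hz)) fun z hz => hfix₂ z (Ioo_subset_Icc_self hz)
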